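/- Let W : ℕ × ℕ → ℂ be symmetric (W(a,b) = W(b,a) for all positive integers a, b), satisfy W(1,1) = 1, and be multiplicative in pairs (W(a,b)·W(c,d) = W(ac,bd) whenever gcd(ab, cd) = 1). Then there exists a multiplicative function E : ℕ → ℂ with (F □_W E)(m) = F(m) for every multiplicative F and every positive integer m if and only if W(1, p^{n}) = 1 for every prime p and every integer n ≥ 1; moreover, in that case any such identity element E equals δ₁ on all positive integers. -/

import Mathlib

/-!
Everything is decided at prime powers `q = p ^ n`, `n ≥ 1`. For each scalar `c` the function
supported on `{1, q}` with values `1` and `c` there is multiplicative. If `E` is a right identity,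
testing it against this function at `q` gives `E q * W (1, q) + c * W (q, 1) = c`. The values `c = 0`
and `c = 1`, with symmetry of `W`, give `W (1, q) = 1` and `E q = 0`; since `E` is multiplicative it
then vanishes at every `m ≥ 2`. Conversely, convolving with `delta1` multiplies `F m` by `W (m, 1)`,
which is `1` as soon as it is so at prime powers, because `m ↦ W (1, m)` is multiplicative.
-/

def IsMult (F : ℕ → ℂ) : Prop :=
  F 1 = 1 ∧ ∀ a b : ℕ, 0 < a → 0 < b → Nat.Coprime a b → F (a * b) = F a * F b

def IsCMult (F : ℕ → ℂ) : Prop :=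
  F 1 = 1 ∧ ∀ a b : ℕ, 0 < a → 0 < b → F (a * b) = F a * F b

def delta1 : ℕ → ℂ := fun n => if n = 1 then 1 else 0

noncomputable def Wconv (W : ℕ × ℕ → ℂ) (F G : ℕ → ℂ) : ℕ → ℂ := fun m =>
  ∑ p ∈ m.divisorsAntidiagonal, F p.1 * G p.2 * W p

noncomputable def uconv (F G : ℕ → ℂ) : ℕ → ℂ := fun m =>
  ∑ p ∈ m.divisorsAntidiagonal.filter (fun p => Nat.Coprime p.1 p.2), F p.1 * G p.2

noncomputable def D (F : ℕ → ℂ) (s : ℂ) : ℂ :=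
  ∑' n : ℕ, F (n + 1) * ((n + 1 : ℕ) : ℂ) ^ (-s)

/-- The function supported on `{1, q}` with value `1` at `1` and `c` at `q`, for `q ≠ 1`. -/
noncomputable def testFun (q : ℕ) (c : ℂ) : ℕ → ℂ :=
  fun n => if n = 1 then 1 else if n = q then c else 0

lemma isMult_delta1 : IsMult delta1 := by
  refine ⟨by simp [delta1], fun a b _ _ _ => ?_⟩
  by_cases h1 : a = 1 <;> by_cases h2 : b = 1 <;> simp [delta1, h1, h2]

/-- A prime power is not a product of two nontrivial coprime factors, so a function supported on
`{1, p ^ n}` is multiplicative whatever its value at `p ^ n`. -/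
lemma isMult_testFun {p n : ℕ} (hp : p.Prime) (c : ℂ) : IsMult (testFun (p ^ n) c) := by
  refine ⟨by simp [testFun], fun a b _ _ hab => ?_⟩
  by_cases h1 : a = 1
  · simp [testFun, h1]
  by_cases h2 : b = 1
  · simp [testFun, h2]
  have hne : a * b ≠ p ^ n := by
    intro h
    obtain ⟨i, -, rfl⟩ := (Nat.dvd_prime_pow hp).1 (Dvd.intro b h)
    obtain ⟨j, -, rfl⟩ := (Nat.dvd_prime_pow hp).1 (Dvd.intro_left _ h)
    have hi : i ≠ 0 := by rintro rfl; simp at h1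
    have hj : j ≠ 0 := by rintro rfl; simp at h2
    exact Nat.not_coprime_of_dvd_of_dvd hp.one_lt (dvd_pow_self p hi) (dvd_pow_self p hj) hab
  have hne' : ¬ (a = p ^ n ∧ b = p ^ n) := by
    rintro ⟨rfl, rfl⟩
    exact h1 ((Nat.coprime_self _).1 hab)
  have h3 : ¬ (a * b = 1) := fun h => h1 (Nat.eq_one_of_mul_eq_one_right h)
  by_cases h4 : a = p ^ n
  · have h5 : b ≠ p ^ n := fun h => hne' ⟨h4, h⟩
    simp only [testFun, if_neg h3, if_neg hne, if_neg h2, if_neg h5, mul_zero]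
  · simp only [testFun, if_neg h3, if_neg hne, if_neg h1, if_neg h4, zero_mul]

lemma Wconv_testFun (W : ℕ × ℕ → ℂ) (E : ℕ → ℂ) {q : ℕ} (hq : 1 < q) (c : ℂ) :
    Wconv W (testFun q c) E q = E q * W (1, q) + c * E 1 * W (q, 1) := by
  have hne : ((1, q) : ℕ × ℕ) ≠ (q, 1) := fun h => hq.ne (Prod.ext_iff.1 h).1
  unfold Wconv
  rw [← Finset.sum_subset (s₁ := {(1, q), (q, 1)}), Finset.sum_pair hne]
  · simp [testFun, hq.ne']
  · intro x hx
    simp only [Finset.mem_insert, Finset.mem_singleton] at hx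
    rcases hx with rfl | rfl <;> simp <;> omega
  · rintro ⟨a, b⟩ hx hn
    simp only [Nat.mem_divisorsAntidiagonal] at hx
    have h1 : a ≠ 1 := by
      rintro rfl
      exact hn (by simp [← hx.1])
    have h2 : a ≠ q := by
      rintro rfl
      have : b = 1 := Nat.eq_of_mul_eq_mul_left (by omega : 0 < a) (by simpa using hx.1)
      exact hn (by simp [this])
    simp [testFun, h1, h2]

lemma Wconv_delta1 (W : ℕ × ℕ → ℂ) (F : ℕ → ℂ) {m : ℕ} (hm : 0 < m) :
    Wconv W F delta1 m = F m * W (m, 1) := by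
  unfold Wconv
  rw [Finset.sum_eq_single (m, 1)]
  · simp [delta1]
  · rintro ⟨a, b⟩ hx hn
    simp only [Nat.mem_divisorsAntidiagonal] at hx
    have : b ≠ 1 := by
      rintro rfl
      exact hn (by simp [← hx.1])
    simp [delta1, this]
  · intro h
    simp [hm.ne'] at h

/-- At a prime power `q`, being a right identity against the test functions with `c = 0, 1` gives
`E q * W (1, q) = 0` and `E q * W (1, q) + W (q, 1) = 1`. -/
lemma identity_at_prime_pow {W : ℕ × ℕ → ℂ}
    (hsymm : ∀ a b : ℕ, 0 < a → 0 < b → W (a, b) = W (b, a))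
    {E : ℕ → ℂ} (hE : IsMult E)
    (hid : ∀ F : ℕ → ℂ, IsMult F → ∀ m : ℕ, 0 < m → Wconv W F E m = F m)
    {p n : ℕ} (hp : p.Prime) (hn : 1 ≤ n) : W (1, p ^ n) = 1 ∧ E (p ^ n) = 0 := by
  have hq : 1 < p ^ n := Nat.one_lt_pow (by omega) hp.one_lt
  have key : ∀ c : ℂ, E (p ^ n) * W (1, p ^ n) + c * W (1, p ^ n) = c := by
    intro c
    have h := hid _ (isMult_testFun (n := n) hp c) (p ^ n) (by omega)
    rw [Wconv_testFun W E hq, hE.1, hsymm (p ^ n) 1 (by omega) one_pos, mul_one] at h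
    rw [h]
    simp only [testFun, if_neg hq.ne', if_true]
  have h0 := key 0
  have h1 := key 1
  have hW : W (1, p ^ n) = 1 := by linear_combination h1 - h0
  refine ⟨hW, ?_⟩
  rw [hW] at h0
  linear_combination h0

lemma IsMult.eq_delta1 {E : ℕ → ℂ} (hE : IsMult E)
    (h : ∀ p n : ℕ, p.Prime → 1 ≤ n → E (p ^ n) = 0) {m : ℕ} (hm : 0 < m) :
    E m = delta1 m := by
  by_cases h1 : m = 1
  · simp [h1, delta1, hE.1]
  have hp := Nat.minFac_prime h1
  obtain ⟨n, k, hk, hmk⟩ := Nat.exists_eq_pow_mul_and_not_dvd hm.ne' m.minFac hp.ne_one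
  have hn : n ≠ 0 := by
    rintro rfl
    rw [pow_zero, one_mul] at hmk
    exact hk (hmk ▸ m.minFac_dvd)
  have hk0 : 0 < k := Nat.pos_of_ne_zero (by rintro rfl; simp at hk)
  have hE' := hE.2 (m.minFac ^ n) k (pow_pos hp.pos n) hk0
    (Nat.Coprime.pow_left n ((Nat.Prime.coprime_iff_not_dvd hp).2 hk))
  rw [← hmk, h _ n hp (by omega), zero_mul] at hE'
  simp [hE', delta1, h1]

lemma W_one_eq_one {W : ℕ × ℕ → ℂ} (h11 : W (1, 1) = 1)
    (hmul : ∀ a b c d : ℕ, 0 < a → 0 < b → 0 < c → 0 < d → Nat.Coprime (a * b) (c * d) →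
      W (a, b) * W (c, d) = W (a * c, b * d))
    (h : ∀ p n : ℕ, Nat.Prime p → 1 ≤ n → W (1, p ^ n) = 1) (m : ℕ) (hm : 0 < m) :
    W (1, m) = 1 := by
  induction m using Nat.recOnPosPrimePosCoprime with
  | prime_pow p n hp hn => exact h p n hp hn
  | zero => omega
  | one => exact h11
  | coprime a b ha hb hab iha ihb =>
    have := hmul 1 a 1 b one_pos (by omega) one_pos (by omega) (by simpa using hab)
    rw [iha (by omega), ihb (by omega)] at this
    simpa using this.symm

theorem identity_lemma (W : ℕ × ℕ → ℂ)
    (hsymm : ∀ a b : ℕ, 0 < a → 0 < b → W (a, b) = W (b, a))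
    (h11 : W (1, 1) = 1)
    (hmul : ∀ a b c d : ℕ, 0 < a → 0 < b → 0 < c → 0 < d → Nat.Coprime (a * b) (c * d) →
      W (a, b) * W (c, d) = W (a * c, b * d)) :
    ((∃ E : ℕ → ℂ, IsMult E ∧
        ∀ F : ℕ → ℂ, IsMult F → ∀ m : ℕ, 0 < m → Wconv W F E m = F m) ↔
      (∀ p n : ℕ, Nat.Prime p → 1 ≤ n → W (1, p ^ n) = 1)) ∧
    (∀ E : ℕ → ℂ, IsMult E →
      (∀ F : ℕ → ℂ, IsMult F → ∀ m : ℕ, 0 < m → Wconv W F E m = F m) →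
      ∀ m : ℕ, 0 < m → E m = delta1 m) := by
  refine ⟨⟨?_, fun h => ⟨delta1, isMult_delta1, fun F _ m hm => ?_⟩⟩, ?_⟩
  · rintro ⟨E, hE, hid⟩ p n hp hn
    exact (identity_at_prime_pow hsymm hE hid hp hn).1
  · rw [Wconv_delta1 W F hm, hsymm m 1 hm one_pos, W_one_eq_one h11 hmul h m hm, mul_one]
  · intro E hE hid m hm
    exact hE.eq_delta1 (fun p n hp hn => (identity_at_prime_pow hsymm hE hid hp hn).2) hm
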